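/- For every integer r ≥ 3 and all sufficiently large n with r - 1 a prime power, ex_r^{lin}(n, {C_{1r}, C*}) ≥ r(r-1)⌊(n-r)/(r-1)^2⌋ and ex_r^{lin}(n, {C_{1r}, C*}) ≤ r(r-2)n/(r-1). -/

import Mathlib

open Finset

/-- A linear `r`-uniform hypergraph: every edge has `r` vertices and
any two distinct edges intersect in at most one vertex. -/
def IsLinear {V : Type*} [DecidableEq V] (r : ℕ) (E : Finset (Finset V)) : Prop :=
  (∀ e ∈ E, e.card = r) ∧ ∀ e ∈ E, ∀ f ∈ E, e ≠ f → (e ∩ f).card ≤ 1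

/-- The degree of a vertex: the number of edges containing it. -/
def degree {V : Type*} [DecidableEq V] (E : Finset (Finset V)) (v : V) : ℕ :=
  (E.filter (fun e => v ∈ e)).card

/-- `E` contains a copy of the `r`-crown `C_{1r}`: `r` pairwise disjoint edges
together with one edge meeting each of them in exactly one vertex. -/
def HasCrown {V : Type*} [DecidableEq V] (r : ℕ) (E : Finset (Finset V)) : Prop :=
  ∃ e ∈ E, ∃ f : Fin r → Finset V,
    (∀ i, f i ∈ E) ∧ (∀ i, f i ≠ e) ∧
    (∀ i j, i ≠ j → f i ∩ f j = ∅) ∧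
    (∀ i, (e ∩ f i).card = 1)

/-- `E` contains a copy of `C*`: `r-2` edges pairwise meeting exactly in a common
vertex `v`, two further edges disjoint from each other and from all the others,
and one edge meeting each of the `r` edges in exactly one vertex, avoiding `v`. -/
def HasCStar {V : Type*} [DecidableEq V] (r : ℕ) (E : Finset (Finset V)) : Prop :=
  ∃ v : V, ∃ e ∈ E, ∃ f : Fin r → Finset V,
    (∀ i, f i ∈ E) ∧ (∀ i, f i ≠ e) ∧
    (∀ i : Fin r, (i : ℕ) < r - 2 → v ∈ f i) ∧
    (∀ i j : Fin r, (i : ℕ) < r - 2 → (j : ℕ) < r - 2 → i ≠ j → f i ∩ f j = {v}) ∧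
    (∀ i j : Fin r, r - 2 ≤ (i : ℕ) → i ≠ j → f i ∩ f j = ∅) ∧
    (∀ i, (e ∩ f i).card = 1) ∧ v ∉ e

section Linear

variable {V : Type*} [DecidableEq V] {r : ℕ} {E : Finset (Finset V)}

lemma IsLinear.eq_of_mem (h : IsLinear r E) {e f : Finset V} (he : e ∈ E) (hf : f ∈ E)
    {x y : V} (hxy : x ≠ y) (hxe : x ∈ e) (hye : y ∈ e) (hxf : x ∈ f) (hyf : y ∈ f) : e = f := by
  by_contra hne
  have h1 := h.2 e he f hf hne
  exact hxy (Finset.card_le_one.1 h1 x (by simp [*]) y (by simp [*]))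

lemma IsLinear.card_inter_eq_one (h : IsLinear r E) {e f : Finset V} (he : e ∈ E) (hf : f ∈ E)
    (hne : e ≠ f) {x : V} (hxe : x ∈ e) (hxf : x ∈ f) : (e ∩ f).card = 1 :=
  le_antisymm (h.2 e he f hf hne) (Finset.card_pos.2 ⟨x, by simp [*]⟩)

/-- A vertex of large degree lies on an edge avoiding a given small set. -/
lemma IsLinear.exists_avoid (h : IsLinear r E) (e : Finset V) {v : V} {X : Finset V}
    (hv : v ∉ X) (hX : X.card + 1 < degree E v) :
    ∃ g ∈ E, v ∈ g ∧ g ≠ e ∧ Disjoint g X := by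
  by_contra! hcon
  have hmeet : ∀ g ∈ (E.filter (fun g => v ∈ g)).erase e, ∃ x ∈ X, x ∈ g := by
    intro g hg
    simp only [mem_erase, mem_filter] at hg
    have := hcon g hg.2.1 hg.2.2 hg.1
    rw [Finset.not_disjoint_iff] at this
    obtain ⟨x, hx, hx'⟩ := this
    exact ⟨x, hx', hx⟩
  have : Nonempty V := ⟨v⟩
  choose! φ hφX hφ using hmeet
  have hle : ((E.filter (fun g => v ∈ g)).erase e).card ≤ X.card := by
    apply Finset.card_le_card_of_injOn φ (fun g hg => hφX g hg)
    intro g hg g' hg' hgg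
    have h1 := hφ g hg
    have h2 := hφ g' hg'
    have h3 := hφX g hg
    simp only [Finset.mem_coe, mem_erase, mem_filter] at hg hg'
    rw [← hgg] at h2
    exact h.eq_of_mem hg.2.1 hg'.2.1 (x := v) (y := φ g) (by rintro rfl; contradiction)
      hg.2.2 h1 hg'.2.2 h2
  have := Finset.pred_card_le_card_erase (s := E.filter (fun g => v ∈ g)) (a := e)
  unfold degree at hX
  omega

/-- Greedy choice of pairwise disjoint edges through the vertices of `t ⊆ e`. -/
lemma IsLinear.exists_disjoint_edges (h : IsLinear r E) {e : Finset V} (he : e ∈ E)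
    (t : Finset V) (hte : t ⊆ e)
    (ht : ∀ s ⊆ t, s.Nonempty → ∃ v ∈ s, (s.card - 1) * (r - 1) + 1 < degree E v) :
    ∃ f : V → Finset V, (∀ v ∈ t, f v ∈ E ∧ f v ≠ e ∧ v ∈ f v) ∧
      ∀ u ∈ t, ∀ v ∈ t, u ≠ v → Disjoint (f u) (f v) := by
  induction hn : t.card generalizing t with
  | zero =>
    rw [Finset.card_eq_zero] at hn
    subst hn
    exact ⟨fun _ => ∅, by simp, by simp⟩
  | succ k ih =>
    obtain ⟨v, hvt, hv⟩ := ht t subset_rfl (Finset.card_pos.1 (by omega))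
    have hcard : (t.erase v).card = k := by rw [Finset.card_erase_of_mem hvt, hn]; rfl
    obtain ⟨f, hf, hd⟩ := ih (t.erase v) ((erase_subset _ _).trans hte)
      (fun s hs => ht s (hs.trans (erase_subset _ _))) hcard
    set X := (t.erase v).biUnion (fun u => (f u).erase u) with hXdef
    have hXcard : X.card ≤ k * (r - 1) := by
      rw [← hcard]
      apply Finset.card_biUnion_le_card_mul
      intro u hu
      rw [Finset.card_erase_of_mem (hf u hu).2.2, h.1 _ (hf u hu).1]
    have hvX : v ∉ X := by
      intro hvX
      simp only [hXdef, mem_biUnion, mem_erase] at hvX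
      obtain ⟨u, hu, hvu, hvf⟩ := hvX
      have := hf u (mem_erase.2 hu)
      exact this.2.1 (h.eq_of_mem this.1 he hvu hvf this.2.2 (hte hvt) (hte hu.2))
    obtain ⟨g, hgE, hvg, hge, hgX⟩ := h.exists_avoid e hvX
      (lt_of_le_of_lt (Nat.add_le_add_right hXcard 1) (by simpa [hn] using hv))
    have hgf : ∀ u ∈ t.erase v, Disjoint g (f u) := by
      intro u hu
      rw [Finset.disjoint_left]
      intro x hxg hxf
      by_cases hxu : x = u
      · subst hxu
        exact hge (h.eq_of_mem hgE he (mem_erase.1 hu).1 hxg hvg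
          (hte (mem_erase.1 hu).2) (hte hvt))
      · exact Finset.disjoint_left.1 hgX hxg
          (mem_biUnion.2 ⟨u, hu, mem_erase.2 ⟨hxu, hxf⟩⟩)
    refine ⟨Function.update f v g, ?_, ?_⟩
    · intro u hu
      by_cases huv : u = v
      · subst huv; simp [hgE, hge, hvg]
      · simpa [huv] using hf u (mem_erase.2 ⟨huv, hu⟩)
    · intro u hu w hw huw
      by_cases huv : u = v
      · subst huv
        simpa [huw.symm] using hgf w (mem_erase.2 ⟨huw.symm, hw⟩)
      · by_cases hwv : w = v
        · subst hwv
          simpa [huv] using (hgf u (mem_erase.2 ⟨huv, hu⟩)).symm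
        · simpa [huv, hwv] using
            hd u (mem_erase.2 ⟨huv, hu⟩) w (mem_erase.2 ⟨hwv, hw⟩) huw

/-- In a crown-free linear hypergraph each edge has a set of vertices of low degree. -/
lemma IsLinear.exists_low_degree (h : IsLinear r E) (hc : ¬ HasCrown r E)
    {e : Finset V} (he : e ∈ E) :
    ∃ s ⊆ e, s.Nonempty ∧ ∀ v ∈ s, degree E v ≤ (s.card - 1) * (r - 1) + 1 := by
  by_contra! hcon
  obtain ⟨f, hf, hd⟩ := h.exists_disjoint_edges he e subset_rfl hcon
  let φ := (Finset.equivFinOfCardEq (h.1 e he)).symm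
  refine hc ⟨e, he, fun i => f (φ i), fun i => (hf _ (φ i).2).1, fun i => (hf _ (φ i).2).2.1,
    ?_, ?_⟩
  · intro i j hij
    rw [← Finset.disjoint_iff_inter_eq_empty]
    exact hd _ (φ i).2 _ (φ j).2 (fun hh => hij (φ.injective (Subtype.ext hh)))
  · intro i
    have := hf _ (φ i).2
    exact h.card_inter_eq_one he this.1 this.2.1.symm (φ i).2 this.2.2

/-- Double counting: a lower bound on `∑ 1 / degree` over every edge bounds the edge number. -/
lemma mul_card_le_of_le_sum_inv_degree {S : Finset V} (hS : ∀ e ∈ E, e ⊆ S) {c : ℝ}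
    (hc : ∀ e ∈ E, c ≤ ∑ v ∈ e, (1 : ℝ) / degree E v) : c * E.card ≤ S.card := by
  calc c * E.card = ∑ e ∈ E, c := by simp [mul_comm]
    _ ≤ ∑ e ∈ E, ∑ v ∈ e, (1 : ℝ) / degree E v := Finset.sum_le_sum hc
    _ = ∑ v ∈ S, ∑ e ∈ E.filter (fun e => v ∈ e), (1 : ℝ) / degree E v := by
      apply Finset.sum_comm'
      intro e v
      simp only [mem_filter]
      exact ⟨fun hh => ⟨⟨hh.1, hh.2⟩, hS e hh.1 hh.2⟩, fun hh => hh.1⟩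
    _ ≤ ∑ v ∈ S, 1 := by
      apply Finset.sum_le_sum
      intro v _
      rw [Finset.sum_const, nsmul_eq_mul]
      change (degree E v : ℝ) * (1 / degree E v) ≤ 1
      rw [mul_one_div]
      exact div_self_le_one _
    _ = S.card := by simp

lemma degree_pos_of_mem {e : Finset V} (he : e ∈ E) {v : V} (hv : v ∈ e) : 0 < degree E v :=
  Finset.card_pos.2 ⟨e, by simp [he, hv]⟩

/-- The lower bound on `∑ 1 / degree` coming from a set of vertices of low degree. -/
lemma le_sum_inv_degree {e s : Finset V} (he : e ∈ E) (hs : s ⊆ e) {d : ℕ}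
    (hd : ∀ v ∈ s, degree E v ≤ d) :
    (s.card : ℝ) / d ≤ ∑ v ∈ e, (1 : ℝ) / degree E v := by
  calc (s.card : ℝ) / d = ∑ v ∈ s, (1 : ℝ) / d := by simp [div_eq_mul_inv]
    _ ≤ ∑ v ∈ s, (1 : ℝ) / degree E v := by
      apply Finset.sum_le_sum
      intro v hv
      have h1 := degree_pos_of_mem he (hs hv)
      have h2 := hd v hv
      gcongr
    _ ≤ _ := Finset.sum_le_sum_of_subset_of_nonneg hs (fun _ _ _ => by positivity)

lemma IsLinear.card_le_of_four_le (hr : 4 ≤ r) (h : IsLinear r E) (hc : ¬ HasCrown r E)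
    {S : Finset V} (hS : ∀ e ∈ E, e ⊆ S) :
    (E.card : ℝ) ≤ r * (r - 2) * S.card / (r - 1) := by
  have hr' : (4 : ℝ) ≤ r := by exact_mod_cast hr
  have key : ((r : ℝ) - 1) / (r * (r - 2)) * E.card ≤ S.card := by
    apply mul_card_le_of_le_sum_inv_degree hS
    intro e he
    obtain ⟨s, hse, hs, hd⟩ := h.exists_low_degree hc he
    refine le_trans ?_ (le_sum_inv_degree he hse hd)
    have h1 : 1 ≤ s.card := Finset.card_pos.2 hs
    have h2 : s.card ≤ r := h.1 e he ▸ Finset.card_le_card hse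
    obtain ⟨i, hi⟩ : ∃ i, s.card = i + 1 := ⟨s.card - 1, by omega⟩
    obtain ⟨j, hj⟩ : ∃ j, r = i + 1 + j := ⟨r - (i + 1), by omega⟩
    have hr1 : ((r - 1 : ℕ) : ℝ) = r - 1 := by rw [Nat.cast_sub (by omega)]; simp
    have hjr : (r : ℝ) = i + 1 + j := by exact_mod_cast hj
    rw [hi]
    push_cast [hr1, Nat.add_sub_cancel]
    have hi0 : (0 : ℝ) ≤ i := by positivity
    have hj0 : (0 : ℝ) ≤ j := by positivity
    have hden : (0 : ℝ) < i * (r - 1) + 1 := by nlinarith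
    rw [div_le_div_iff₀ (by nlinarith) hden]
    have hi' : (i : ℝ) ≤ r - 1 := by linarith
    nlinarith [mul_nonneg hi0 (sub_nonneg.2 hi'), mul_nonneg (sub_nonneg.2 hi') (by nlinarith : (0:ℝ) ≤ r - 1)]
  rw [le_div_iff₀ (by linarith)]
  rw [div_mul_eq_mul_div, div_le_iff₀ (by nlinarith)] at key
  linarith

end Linear

section Triple

variable {V : Type*} [DecidableEq V] {E : Finset (Finset V)}

lemma IsLinear.not_three_disjoint (h : IsLinear 3 E) (hc : ¬ HasCrown 3 E)
    {e f g k : Finset V} {x y z : V} (he : e ∈ E) (hf : f ∈ E) (hg : g ∈ E) (hk : k ∈ E)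
    (hfe : f ≠ e) (hge : g ≠ e) (hke : k ≠ e) (hxe : x ∈ e) (hye : y ∈ e) (hze : z ∈ e)
    (hxf : x ∈ f) (hyg : y ∈ g) (hzk : z ∈ k)
    (hfg : Disjoint f g) (hfk : Disjoint f k) (hgk : Disjoint g k) : False := by
  apply hc
  refine ⟨e, he, ![f, g, k], ?_, ?_, ?_, ?_⟩
  · intro i; fin_cases i <;> simp [hf, hg, hk]
  · intro i; fin_cases i <;> simp [hfe, hge, hke]
  · intro i j hij
    rw [← Finset.disjoint_iff_inter_eq_empty]
    fin_cases i <;> fin_cases j <;> simp_all [disjoint_comm]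
  · intro i
    fin_cases i
    · exact h.card_inter_eq_one he hf hfe.symm hxe hxf
    · exact h.card_inter_eq_one he hg hge.symm hye hyg
    · exact h.card_inter_eq_one he hk hke.symm hze hzk

lemma IsLinear.eq_triple (h : IsLinear 3 E) {e : Finset V} (he : e ∈ E) {x y z : V}
    (hx : x ∈ e) (hy : y ∈ e) (hz : z ∈ e) (hxy : x ≠ y) (hxz : x ≠ z) (hyz : y ≠ z) :
    e = {x, y, z} := by
  symm
  apply Finset.eq_of_subset_of_card_le
  · intro w; simp; rintro (rfl | rfl | rfl) <;> assumption
  · rw [h.1 e he, Finset.card_eq_three.2 ⟨x, y, z, hxy, hxz, hyz, rfl⟩]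

lemma IsLinear.triple_ne (h : IsLinear 3 E) {x y z : V} (he : {x, y, z} ∈ E) :
    x ≠ y ∧ x ≠ z ∧ y ≠ z := by
  have hcard := h.1 _ he
  have h2 : ∀ u v : V, ({u, v} : Finset V).card ≤ 2 := fun u v => Finset.card_le_two
  refine ⟨?_, ?_, ?_⟩ <;> rintro rfl
  · have := h2 x z; simp_all
  · have := h2 x y; rw [Finset.pair_comm] at hcard; simp_all
  · have := h2 x y; simp_all

lemma IsLinear.exists_third (h : IsLinear 3 E) {e : Finset V} (he : e ∈ E) {x y : V}
    (hx : x ∈ e) (hy : y ∈ e) (hxy : x ≠ y) : ∃ z, e = {x, y, z} := by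
  have hcard : 0 < ((e.erase x).erase y).card := by
    rw [Finset.card_erase_of_mem (by simp [hy, hxy.symm]), Finset.card_erase_of_mem hx, h.1 e he]
    norm_num
  obtain ⟨z, hz⟩ := Finset.card_pos.1 hcard
  simp only [mem_erase] at hz
  exact ⟨z, h.eq_triple he hx hy hz.2.2 hxy (Ne.symm hz.2.1) (Ne.symm hz.1)⟩

/-- Linearity for triples sharing two listed points. -/
lemma IsLinear.third_unique (h : IsLinear 3 E) {x y z w : V} (h1 : {x, y, z} ∈ E)
    (h2 : {x, y, w} ∈ E) : z = w := by
  have hn := h.triple_ne h1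
  have := h.eq_of_mem h1 h2 hn.1 (by simp) (by simp) (by simp) (by simp)
  have hz : z ∈ ({x, y, w} : Finset V) := this ▸ by simp
  simp at hz
  grind

lemma triple_swap {x y z : V} (h : {x, y, z} ∈ E) : {x, z, y} ∈ E := by
  rwa [Finset.pair_comm]

lemma triple_rotate {x y z : V} (h : {x, y, z} ∈ E) : {y, z, x} ∈ E := by
  have : ({y, z, x} : Finset V) = {x, y, z} := by ext; simp; tauto
  rwa [this]

/-- If edges through two vertices of `e` are disjoint, their remaining points all lie on
edges through the third vertex. -/
lemma IsLinear.exists_edge_through (h : IsLinear 3 E) (hc : ¬ HasCrown 3 E) {a b c p : V}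
    (he : {a, b, c} ∈ E) (hdc : 5 ≤ degree E c) {f g : Finset V} (hf : f ∈ E) (hg : g ∈ E)
    (hfe : f ≠ {a, b, c}) (hge : g ≠ {a, b, c}) (haf : a ∈ f) (hbg : b ∈ g)
    (hfg : Disjoint f g) (hp : p ∈ f ∪ g) (hpa : p ≠ a) (hpb : p ≠ b) :
    ∃ w, {c, p, w} ∈ E := by
  have hne := h.triple_ne he
  set X := (((f ∪ g).erase a).erase b).erase p with hX
  have hcf : c ∉ f := fun hh => hfe (h.eq_of_mem hf he hne.2.1 haf hh (by simp) (by simp))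
  have hcg : c ∉ g := fun hh => hge (h.eq_of_mem hg he hne.2.2 hbg hh (by simp) (by simp))
  have hXcard : X.card = 3 := by
    rw [hX, Finset.card_erase_of_mem (by simp_all), Finset.card_erase_of_mem (by
      simp [hbg, hne.1.symm]), Finset.card_erase_of_mem (by simp [haf]),
      Finset.card_union_of_disjoint hfg, h.1 f hf, h.1 g hg]
  obtain ⟨k, hk, hck, hke, hkX⟩ := h.exists_avoid {a, b, c} (v := c) (X := X)
    (by simp [hX, hcf, hcg]) (by omega)
  have hak : a ∉ k := fun hh => hke (h.eq_of_mem hk he hne.2.1 hh hck (by simp) (by simp))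
  have hbk : b ∉ k := fun hh => hke (h.eq_of_mem hk he hne.2.2 hh hck (by simp) (by simp))
  by_cases hpk : p ∈ k
  · obtain ⟨w, rfl⟩ := h.exists_third hk hck hpk (by rintro rfl; simp_all)
    exact ⟨w, hk⟩
  · exfalso
    have hdisj : Disjoint (f ∪ g) k := by
      rw [Finset.disjoint_left] at hkX ⊢
      intro x hx hxk
      exact hkX hxk (by simp only [hX, mem_erase]; grind)
    rw [Finset.disjoint_union_left] at hdisj
    exact h.not_three_disjoint hc he hf hg hk hfe hge hke (x := a) (y := b) (z := c)
      (by simp) (by simp) (by simp) haf hbg hck hfg hdisj.1 hdisj.2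

lemma IsLinear.exists_triple_avoid (h : IsLinear 3 E) (e : Finset V) {v : V} (X : Finset V)
    (hv : v ∉ X) {d : ℕ} (hX : X.card + 1 < d) (hd : d ≤ degree E v) :
    ∃ x y, {v, x, y} ∈ E ∧ {v, x, y} ≠ e ∧ x ∉ X ∧ y ∉ X := by
  obtain ⟨g, hg, hvg, hge, hgX⟩ := h.exists_avoid e hv (hX.trans_le hd)
  have : 1 < g.card := by rw [h.1 g hg]; norm_num
  obtain ⟨x, hx, hxv⟩ := Finset.exists_mem_ne this v
  obtain ⟨y, rfl⟩ := h.exists_third hg hvg hx hxv.symm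
  rw [Finset.disjoint_left] at hgX
  exact ⟨x, y, hg, hge, hgX (by simp), hgX (by simp)⟩

end Triple

section Link

variable {V : Type*} [DecidableEq V] {E : Finset (Finset V)} {e : Finset V}

/-- `x` together with the pair `s, t` outside `e` forms an edge. -/
def Link (E : Finset (Finset V)) (e : Finset V) (x s t : V) : Prop :=
  {x, s, t} ∈ E ∧ s ∉ e ∧ t ∉ e

/-- An edge `e = abc` of a crown-free linear `3`-graph whose vertices have large degrees. -/
structure IsHeavy (E : Finset (Finset V)) (e : Finset V) (a b c : V) : Prop where
  lin : IsLinear 3 E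
  crown : ¬ HasCrown 3 E
  mem : e ∈ E
  ha : a ∈ e
  hb : b ∈ e
  hc : c ∈ e
  hab : a ≠ b
  hac : a ≠ c
  hbc : b ≠ c
  da : 4 ≤ degree E a
  db : 5 ≤ degree E b
  dc : 5 ≤ degree E c

lemma Link.symm {x s t : V} (h : Link E e x s t) : Link E e x t s :=
  ⟨triple_swap h.1, h.2.2, h.2.1⟩

lemma Link.ne (h : IsLinear 3 E) {x s t : V} (hl : Link E e x s t) : s ≠ t :=
  (h.triple_ne hl.1).2.2

lemma Link.unique (h : IsLinear 3 E) {x s t t' : V} (hl : Link E e x s t)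
    (hl' : Link E e x s t') : t = t' :=
  h.third_unique hl.1 hl'.1

lemma Link.false_of_ne (h : IsLinear 3 E) {x y s t : V} (hxy : x ≠ y) (hl : Link E e x s t)
    (hl' : Link E e y s t) : False :=
  hxy (h.third_unique (triple_rotate hl.1) (triple_rotate hl'.1))

lemma Link.ne_edge {x s t : V} (hl : Link E e x s t) : ({x, s, t} : Finset V) ≠ e := by
  rintro rfl
  exact hl.2.1 (by simp)

lemma Link.ne_of_mem {x y s t : V} (hl : Link E e x s t) (hy : y ∈ e) : s ≠ y ∧ t ≠ y :=
  ⟨fun hh => hl.2.1 (hh ▸ hy), fun hh => hl.2.2 (hh ▸ hy)⟩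

lemma link_of_mem (h : IsLinear 3 E) (he : e ∈ E) {x s t : V} (hx : x ∈ e) (hs : s ∉ e)
    (hl : {x, s, t} ∈ E) : Link E e x s t := by
  refine ⟨hl, hs, fun ht => hs ?_⟩
  have := h.eq_of_mem hl he (h.triple_ne hl).2.1 (by simp) (by simp) hx ht
  rw [← this]
  simp

lemma link_disjoint {x y s t s' t' : V} (hx : x ∈ e) (hy : y ∈ e) (hxy : x ≠ y)
    (hl : Link E e x s t) (hl' : Link E e y s' t') (h1 : s ≠ s') (h2 : s ≠ t') (h3 : t ≠ s')
    (h4 : t ≠ t') : Disjoint ({x, s, t} : Finset V) {y, s', t'} := by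
  have := hl.ne_of_mem hy
  have := hl'.ne_of_mem hx
  simp only [Finset.disjoint_left, mem_insert, mem_singleton]
  grind

namespace IsHeavy

variable {a b c : V}

lemma swap (H : IsHeavy E e a b c) : IsHeavy E e a c b :=
  ⟨H.lin, H.crown, H.mem, H.ha, H.hc, H.hb, H.hac, H.hab, H.hbc.symm, H.da, H.dc, H.db⟩

lemma eq_triple (H : IsHeavy E e a b c) : e = {a, b, c} :=
  H.lin.eq_triple H.mem H.ha H.hb H.hc H.hab H.hac H.hbc

lemma not_crown (H : IsHeavy E e a b c) {u v s t s' t' : V} (h1 : Link E e a u v)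
    (h2 : Link E e b s t) (h3 : Link E e c s' t') :
    u = s ∨ u = t ∨ v = s ∨ v = t ∨ u = s' ∨ u = t' ∨ v = s' ∨ v = t' ∨
      s = s' ∨ s = t' ∨ t = s' ∨ t = t' := by
  by_contra! hcon
  obtain ⟨_, _, _, _, _, _, _, _, _, _, _, _⟩ := hcon
  apply H.lin.not_three_disjoint H.crown H.mem h1.1 h2.1 h3.1 h1.ne_edge h2.ne_edge h3.ne_edge
    H.ha H.hb H.hc (by simp) (by simp) (by simp)
  · exact link_disjoint H.ha H.hb H.hab h1 h2 ‹_› ‹_› ‹_› ‹_›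
  · exact link_disjoint H.ha H.hc H.hac h1 h3 ‹_› ‹_› ‹_› ‹_›
  · exact link_disjoint H.hb H.hc H.hbc h2 h3 ‹_› ‹_› ‹_› ‹_›

lemma exists_link (H : IsHeavy E e a b c) {u v s t p : V} (h1 : Link E e a u v)
    (h2 : Link E e b s t) (hus : u ≠ s) (hut : u ≠ t) (hvs : v ≠ s) (hvt : v ≠ t)
    (hp : p = u ∨ p = v ∨ p = s ∨ p = t) : ∃ w, Link E e c p w := by
  have hpe : p ∉ e := by
    rcases hp with rfl | rfl | rfl | rfl
    exacts [h1.2.1, h1.2.2, h2.2.1, h2.2.2]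
  have he := H.eq_triple
  obtain ⟨w, hw⟩ := H.lin.exists_edge_through H.crown (he ▸ H.mem) H.dc h1.1 h2.1
    (he ▸ h1.ne_edge) (he ▸ h2.ne_edge) (by simp) (by simp)
    (link_disjoint H.ha H.hb H.hab h1 h2 hus hut hvs hvt) (p := p)
    (by simp; tauto) (fun hh => hpe (hh ▸ H.ha)) (fun hh => hpe (hh ▸ H.hb))
  exact ⟨w, link_of_mem H.lin H.mem H.hc hpe hw⟩

lemma exists_link_avoid (hl : IsLinear 3 E) (he : e ∈ E) {x : V} (hx : x ∈ e) {d : ℕ}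
    (hd : d ≤ degree E x) (X : Finset V) (hX : X.card + 1 < d) (hXe : Disjoint e X) :
    ∃ s t, Link E e x s t ∧ s ∉ X ∧ t ∉ X := by
  obtain ⟨s, t, h1, h2, h3, h4⟩ := hl.exists_triple_avoid e X
    (Finset.disjoint_left.1 hXe hx) hX hd
  refine ⟨s, t, link_of_mem hl he hx ?_ h1, h3, h4⟩
  intro hs
  exact h2 (hl.eq_of_mem h1 he (hl.triple_ne h1).1 (by simp) (by simp) hx hs)

lemma exists_link_avoid_two (hl : IsLinear 3 E) (he : e ∈ E) {x : V} (hx : x ∈ e)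
    (hd : 4 ≤ degree E x) {u v : V} (hu : u ∉ e) (hv : v ∉ e) :
    ∃ s t, Link E e x s t ∧ s ≠ u ∧ s ≠ v ∧ t ≠ u ∧ t ≠ v := by
  obtain ⟨s, t, h1, h2, h3⟩ := exists_link_avoid hl he hx hd {u, v}
    (by have := Finset.card_le_two (a := u) (b := v); omega) (by simp [hu, hv])
  simp only [mem_insert, mem_singleton, not_or] at h2 h3
  exact ⟨s, t, h1, h2.1, h2.2, h3.1, h3.2⟩

lemma exists_link_avoid_three (hl : IsLinear 3 E) (he : e ∈ E) {x : V} (hx : x ∈ e)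
    (hd : 5 ≤ degree E x) {u v w : V} (hu : u ∉ e) (hv : v ∉ e) (hw : w ∉ e) :
    ∃ s t, Link E e x s t ∧ s ≠ u ∧ s ≠ v ∧ s ≠ w ∧ t ≠ u ∧ t ≠ v ∧ t ≠ w := by
  obtain ⟨s, t, h1, h2, h3⟩ := exists_link_avoid hl he hx hd {u, v, w}
    (by have := Finset.card_le_three (a := u) (b := v) (c := w); omega) (by simp [hu, hv, hw])
  simp only [mem_insert, mem_singleton, not_or] at h2 h3
  exact ⟨s, t, h1, h2.1, h2.2.1, h2.2.2, h3.1, h3.2.1, h3.2.2⟩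

lemma exists_link_left (H : IsHeavy E e a b c) {u v : V} (h : Link E e a u v) :
    ∃ p, Link E e c u p := by
  obtain ⟨s, t, h1, _, _, _, _⟩ := exists_link_avoid_two H.lin H.mem H.hb
    (le_trans (by norm_num) H.db) h.2.1 h.2.2
  exact H.exists_link h h1 (by tauto) (by tauto) (by tauto) (by tauto) (Or.inl rfl)

/-- The links of `b` and `c` close up to a four-cycle on each pair in the link of `a`. -/
lemma link_diag (H : IsHeavy E e a b c) {u v p : V} (h : Link E e a u v)
    (hb : Link E e b u p) : Link E e c v p := by
  obtain ⟨s, t, h1, _, _, _, _⟩ := exists_link_avoid_two H.lin H.mem H.ha H.da hb.2.1 hb.2.2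
  obtain ⟨w, hw⟩ := H.exists_link h1 hb ‹_› ‹_› ‹_› ‹_› (p := p) (by simp)
  by_cases hwv : w = v
  · exact hwv ▸ hw.symm
  · exfalso
    obtain ⟨x, y, h2, _, _, _, _, _, _⟩ := exists_link_avoid_three H.lin H.mem H.hb H.db
      h.2.1 h.2.2 hw.2.2
    have hup := hb.ne H.lin
    have hvp : v ≠ p := by
      rintro rfl
      exact Link.false_of_ne H.lin H.hab h hb
    have hwu : w ≠ u := by
      rintro rfl
      exact Link.false_of_ne H.lin H.hbc hb hw.symm
    have hxp : x ≠ p := by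
      rintro rfl
      have := h2.unique H.lin hb.symm
      tauto
    have hyp : y ≠ p := by
      rintro rfl
      have := h2.symm.unique H.lin hb.symm
      tauto
    have := H.not_crown h h2 hw
    tauto

/-- The links of `b` and `c` consist of two four-cycles. -/
lemma exists_four_cycles (H : IsHeavy E e a b c) {u v : V} (h : Link E e a u v) :
    ∃ p q x y z w, Link E e b u p ∧ Link E e b v q ∧ Link E e c u q ∧ Link E e c v p ∧
      Link E e b x y ∧ Link E e b z w ∧ Link E e c x z ∧ Link E e c y w ∧
      [u, v, p, q, x, y, z, w].Nodup := by
  obtain ⟨p, hp⟩ := H.swap.exists_link_left h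
  obtain ⟨q, hq⟩ := H.swap.exists_link_left h.symm
  have hvp := H.link_diag h hp
  have huq := H.link_diag h.symm hq
  have sB : ∀ {s t}, Link E e b s t → Link E e b t s := fun h => h.symm
  have sC : ∀ {s t}, Link E e c s t → Link E e c t s := fun h => h.symm
  have nB : ∀ {s t}, Link E e b s t → s ≠ t := fun h => h.ne H.lin
  have nC : ∀ {s t}, Link E e c s t → s ≠ t := fun h => h.ne H.lin
  have uB : ∀ {s t t'}, Link E e b s t → Link E e b s t' → t = t' :=
    fun h h' => h.unique H.lin h'
  have uC : ∀ {s t t'}, Link E e c s t → Link E e c s t' → t = t' :=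
    fun h h' => h.unique H.lin h'
  have dBC : ∀ {s t}, Link E e b s t → Link E e c s t → False :=
    fun h h' => Link.false_of_ne H.lin H.hbc h h'
  have huv := h.ne H.lin
  have key : ∃ x y z w, Link E e b x y ∧ Link E e b z w ∧ Link E e c x z ∧
      x ≠ u ∧ x ≠ v ∧ y ≠ u ∧ y ≠ v ∧ z ≠ u ∧ z ≠ v ∧ w ≠ u ∧ w ≠ v ∧ z ≠ y := by
    obtain ⟨x, y, hxy, _, _, _, _⟩ := exists_link_avoid_two H.lin H.mem H.hb
      (le_trans (by norm_num) H.db) h.2.1 h.2.2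
    obtain ⟨z, w, hzw, _, _, _, _, _, _⟩ := exists_link_avoid_three H.lin H.mem H.hb
      H.db h.2.1 h.2.2 hxy.2.1
    obtain ⟨s, t, hst, _, _, _, _⟩ := exists_link_avoid_two H.lin H.mem H.hc
      (le_trans (by norm_num) H.dc) h.2.1 h.2.2
    have h1 := H.not_crown h hxy hst
    have h2 := H.not_crown h hzw hst
    have hzy : z ≠ y := by
      rintro rfl
      have := uB hzw (sB hxy)
      contradiction
    have hwy : w ≠ y := by
      rintro rfl
      have := uB (sB hzw) (sB hxy)
      contradiction
    have h1' : s = x ∨ t = x ∨ s = y ∨ t = y := by grind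
    have h2' : s = z ∨ t = z ∨ s = w ∨ t = w := by grind
    rcases h1' with rfl | rfl | rfl | rfl <;> rcases h2' with rfl | rfl | rfl | rfl <;>
      first
      | exact absurd rfl ‹_›
      | exact ⟨_, _, _, _, hxy, hzw, hst, by grind⟩
      | exact ⟨_, _, _, _, hxy, hzw, sC hst, by grind⟩
      | exact ⟨_, _, _, _, sB hxy, hzw, hst, by grind⟩
      | exact ⟨_, _, _, _, sB hxy, hzw, sC hst, by grind⟩
      | exact ⟨_, _, _, _, hxy, sB hzw, hst, by grind⟩
      | exact ⟨_, _, _, _, hxy, sB hzw, sC hst, by grind⟩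
      | exact ⟨_, _, _, _, sB hxy, sB hzw, hst, by grind⟩
      | exact ⟨_, _, _, _, sB hxy, sB hzw, sC hst, by grind⟩
  obtain ⟨x, y, z, w, hxy, hzw, hxz, _, _, _, _, _, _, _, _, hzy⟩ := key
  obtain ⟨s, t, hst, _, _, _, _, _, _⟩ := exists_link_avoid_three H.lin H.mem H.hc
      H.dc h.2.1 h.2.2 hxy.2.1
  have hyw : Link E e c y w := by
    have h1 := H.not_crown h hxy hst
    have h2 := H.not_crown h hzw hst
    have hsz : s ≠ z := by
      rintro rfl
      have := uC hst (sC hxz)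
      contradiction
    have htz : t ≠ z := by
      rintro rfl
      have := uC (sC hst) (sC hxz)
      contradiction
    have hyw : y ≠ w := by
      rintro rfl
      exact nC hxz (uB (sB hxy) (sB hzw))
    have h1' : s = y ∨ t = y := by grind
    have h2' : s = w ∨ t = w := by grind
    rcases h1' with rfl | rfl <;> rcases h2' with h2 | h2
    · exact absurd h2 hyw
    · exact h2 ▸ hst
    · exact h2 ▸ sC hst
    · exact absurd h2 hyw
  refine ⟨p, q, x, y, z, w, hp, hq, huq, hvp, hxy, hzw, hxz, hyw, ?_⟩
  have hpq : p ≠ q := by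
    rintro rfl
    exact huv (uB (sB hp) (sB hq))
  have hpB : ∀ {s t}, Link E e b s t → s ≠ u → s ≠ v → t ≠ u → t ≠ v → s ≠ p ∧ s ≠ q := by
    intro s t hst _ _ h1 h2
    constructor
    · rintro rfl
      exact h1 (uB hst (sB hp))
    · rintro rfl
      exact h2 (uB hst (sB hq))
  have h1 := hpB hxy ‹_› ‹_› ‹_› ‹_›
  have h2 := hpB (sB hxy) ‹_› ‹_› ‹_› ‹_›
  have h3 := hpB hzw ‹_› ‹_› ‹_› ‹_›
  have h4 := hpB (sB hzw) ‹_› ‹_› ‹_› ‹_›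
  have hxw : x ≠ w := by
    rintro rfl
    exact hzy (uB (sB hzw) hxy)
  have := nB hp
  have := nB hq
  have := nB hxy
  have := nB hzw
  have := nC huq
  have := nC hvp
  have := nC hxz
  have := nC hyw
  simp only [List.nodup_cons, List.mem_cons, List.not_mem_nil, or_false, not_or, List.nodup_nil,
    not_false_eq_true, and_true]
  grind

end IsHeavy

end Link

section Block

variable {V : Type*} [DecidableEq V] {E : Finset (Finset V)}

/-- Pairs from two blocks of four points, joined to `a`, `b`, `c`: a decomposition of two
complete graphs into perfect matchings with one pair missing. -/
structure IsBlockPair (E : Finset (Finset V)) (a b c x₀ x₁ x₂ x₃ x₄ x₅ x₆ x₇ : V) : Prop where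
  a02 : {a, x₀, x₂} ∈ E
  a13 : {a, x₁, x₃} ∈ E
  a46 : {a, x₄, x₆} ∈ E
  b01 : {b, x₀, x₁} ∈ E
  b23 : {b, x₂, x₃} ∈ E
  b45 : {b, x₄, x₅} ∈ E
  b67 : {b, x₆, x₇} ∈ E
  c12 : {c, x₁, x₂} ∈ E
  c30 : {c, x₃, x₀} ∈ E
  c56 : {c, x₅, x₆} ∈ E
  c74 : {c, x₇, x₄} ∈ E
  nodup : [a, b, c, x₀, x₁, x₂, x₃, x₄, x₅, x₆, x₇].Nodup

lemma IsLinear.mem_of_crown (h : IsLinear 3 E) (hc : ¬ HasCrown 3 E) {g : Finset V}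
    {x y z y₁ y₂ z₁ z₂ : V} (he : {x, y, z} ∈ E) (hg : g ∈ E) (hx : x ∈ g) (hyg : y ∉ g)
    (hzg : z ∉ g) (hy : {y, y₁, y₂} ∈ E) (hz : {z, z₁, z₂} ∈ E)
    (hn : [x, y, z, y₁, y₂, z₁, z₂].Nodup) : y₁ ∈ g ∨ y₂ ∈ g ∨ z₁ ∈ g ∨ z₂ ∈ g := by
  by_contra! hcon
  obtain ⟨h1, h2, h3, h4⟩ := hcon
  simp only [List.nodup_cons, List.mem_cons, List.not_mem_nil, or_false, not_or, List.nodup_nil,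
    not_false_eq_true, and_true] at hn
  have hne : ∀ {e f : Finset V} (w : V), w ∈ e → w ∉ f → e ≠ f := by
    rintro e f w hw hw' rfl
    exact hw' hw
  refine h.not_three_disjoint hc he hg hy hz (x := x) (y := y) (z := z)
    (hne y (by simp) hyg).symm (hne y₁ (by simp) ?_) (hne z₁ (by simp) ?_)
    (by simp) (by simp) (by simp) hx (by simp) (by simp) ?_ ?_ ?_
  · simp only [mem_insert, mem_singleton]; grind
  · simp only [mem_insert, mem_singleton]; grind
  · simp [hyg, h1, h2]
  · simp [hzg, h3, h4]
  · simp only [Finset.disjoint_left, mem_insert, mem_singleton]; grind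

lemma IsLinear.notMem_of_triple (h : IsLinear 3 E) {g : Finset V} (hg : g ∈ E) {x s t : V}
    (hl : {x, s, t} ∈ E) (hx : x ∉ g) (hs : s ∈ g) : t ∉ g := fun ht =>
  hx (by rw [h.eq_of_mem hg hl (h.triple_ne hl).2.2 hs ht (by simp) (by simp)]; simp)

namespace IsBlockPair

variable {a b c x₀ x₁ x₂ x₃ x₄ x₅ x₆ x₇ : V}

lemma flip (H : IsBlockPair E a b c x₀ x₁ x₂ x₃ x₄ x₅ x₆ x₇) :
    IsBlockPair E a b c x₁ x₀ x₃ x₂ x₄ x₅ x₆ x₇ :=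
  ⟨H.a13, H.a02, H.a46, triple_swap H.b01, triple_swap H.b23, H.b45, H.b67, triple_swap H.c30,
    triple_swap H.c12, H.c56, H.c74, by have := H.nodup; simp at this ⊢; grind⟩

lemma turn (H : IsBlockPair E a b c x₀ x₁ x₂ x₃ x₄ x₅ x₆ x₇) :
    IsBlockPair E a b c x₃ x₂ x₁ x₀ x₄ x₅ x₆ x₇ :=
  ⟨triple_swap H.a13, triple_swap H.a02, H.a46, triple_swap H.b23, triple_swap H.b01, H.b45,
    H.b67, triple_swap H.c12, triple_swap H.c30, H.c56, H.c74,
    by have := H.nodup; simp at this ⊢; grind⟩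

lemma turn_right (H : IsBlockPair E a b c x₀ x₁ x₂ x₃ x₄ x₅ x₆ x₇) :
    IsBlockPair E a b c x₀ x₁ x₂ x₃ x₆ x₇ x₄ x₅ :=
  ⟨H.a02, H.a13, triple_swap H.a46, H.b01, H.b23, H.b67, H.b45, H.c12, H.c30, H.c74, H.c56,
    by have := H.nodup; simp at this ⊢; grind⟩

lemma notMem_left (H : IsBlockPair E a b c x₀ x₁ x₂ x₃ x₄ x₅ x₆ x₇) (h : IsLinear 3 E)
    (hc : ¬ HasCrown 3 E) {g : Finset V} (hg : g ∈ E) (hag : a ∉ g) (hbg : b ∉ g)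
    (hcg : c ∉ g) : x₀ ∉ g := by
  intro h0
  have h1 := h.notMem_of_triple hg H.b01 hbg h0
  have h2 := h.notMem_of_triple hg H.a02 hag h0
  have h3 := h.notMem_of_triple hg (triple_swap H.c30) hcg h0
  have hn := H.nodup
  simp only [List.nodup_cons, List.mem_cons, List.not_mem_nil, or_false, not_or, List.nodup_nil,
    not_false_eq_true, and_true] at hn
  have m := fun {x s t : V} => h.notMem_of_triple hg (x := x) (s := s) (t := t)
  have k1 := h.mem_of_crown hc (triple_rotate H.b01) hg h0 h1 hbg (triple_rotate H.c12) H.b45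
    (by simp; grind)
  have k2 := h.mem_of_crown hc (triple_rotate H.b01) hg h0 h1 hbg (triple_rotate H.c12) H.b67
    (by simp; grind)
  have k3 := h.mem_of_crown hc (triple_rotate (triple_rotate H.c30)) hg h0 hcg h3 H.c56
    (triple_rotate (triple_swap H.b23)) (by simp; grind)
  have k4 := h.mem_of_crown hc (triple_rotate (triple_rotate H.c30)) hg h0 hcg h3 H.c74
    (triple_rotate (triple_swap H.b23)) (by simp; grind)
  have k5 := h.mem_of_crown hc (triple_rotate H.a02) hg h0 h2 hag (triple_rotate H.b23) H.a46
    (by simp; grind)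
  have n1 := m H.a46 hag
  have n2 := m H.c74 hcg
  have n3 := m H.b45 hbg
  have n4 := m H.b67 hbg
  have n5 := m H.c56 hcg
  grind

lemma disjoint (H : IsBlockPair E a b c x₀ x₁ x₂ x₃ x₄ x₅ x₆ x₇) (h : IsLinear 3 E)
    (hc : ¬ HasCrown 3 E) {g : Finset V} (hg : g ∈ E) (hag : a ∉ g) (hbg : b ∉ g)
    (hcg : c ∉ g) : Disjoint g {a, b, c, x₀, x₁, x₂, x₃, x₄, x₅, x₆, x₇} := by
  have h0 := H.notMem_left h hc hg hag hbg hcg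
  have h1 := H.flip.notMem_left h hc hg hag hbg hcg
  have h2 := H.turn.flip.notMem_left h hc hg hag hbg hcg
  have h3 := H.turn.notMem_left h hc hg hag hbg hcg
  have right : ∀ {x₄ x₅ x₆ x₇ : V}, IsBlockPair E a b c x₀ x₁ x₂ x₃ x₄ x₅ x₆ x₇ →
      x₄ ∉ g ∧ x₅ ∉ g := by
    intro x₄ x₅ x₆ x₇ H
    have hn := H.nodup
    simp only [List.nodup_cons, List.mem_cons, List.not_mem_nil, or_false, not_or,
      List.nodup_nil, not_false_eq_true, and_true] at hn
    have h4 : x₄ ∉ g := by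
      intro h4
      have n5 := h.notMem_of_triple hg H.b45 hbg h4
      have n6 := h.notMem_of_triple hg H.a46 hag h4
      have := h.mem_of_crown hc (triple_rotate H.b45) hg h4 n5 hbg
        (triple_rotate H.c56) H.b01 (by simp; grind)
      tauto
    refine ⟨h4, fun h5 => ?_⟩
    have n6 := h.notMem_of_triple hg H.c56 hcg h5
    have := h.mem_of_crown hc (triple_rotate (triple_swap H.b45)) hg h5 h4 hbg
      (triple_rotate H.a46) H.b01 (by simp; grind)
    tauto
  have h4 := right H
  have h6 := right H.turn_right
  simp [*]

lemma card_eq (H : IsBlockPair E a b c x₀ x₁ x₂ x₃ x₄ x₅ x₆ x₇) :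
    ({a, b, c, x₀, x₁, x₂, x₃, x₄, x₅, x₆, x₇} : Finset V).card = 11 := by
  have : ({a, b, c, x₀, x₁, x₂, x₃, x₄, x₅, x₆, x₇} : Finset V) =
      [a, b, c, x₀, x₁, x₂, x₃, x₄, x₅, x₆, x₇].toFinset := by simp
  rw [this, List.toFinset_card_of_nodup H.nodup]
  rfl

lemma subset (H : IsBlockPair E a b c x₀ x₁ x₂ x₃ x₄ x₅ x₆ x₇) {S : Finset V}
    (hS : ∀ e ∈ E, e ⊆ S) : {a, b, c, x₀, x₁, x₂, x₃, x₄, x₅, x₆, x₇} ⊆ S := by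
  have h1 := hS _ H.a02
  have h2 := hS _ H.b23
  have h3 := hS _ H.c12
  have h4 := hS _ H.b45
  have h5 := hS _ H.b67
  simp only [Finset.insert_subset_iff, Finset.singleton_subset_iff] at *
  tauto

end IsBlockPair

end Block

namespace IsHeavy

variable {V : Type*} [DecidableEq V] {E : Finset (Finset V)} {e : Finset V} {a b c : V}

lemma exists_isBlockPair (H : IsHeavy E e a b c) :
    ∃ x₀ x₁ x₂ x₃ x₄ x₅ x₆ x₇, IsBlockPair E a b c x₀ x₁ x₂ x₃ x₄ x₅ x₆ x₇ := by
  obtain ⟨u, v, h, -⟩ := exists_link_avoid H.lin H.mem H.ha H.da ∅ (by simp) (by simp)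
  obtain ⟨p, q, x, y, z, w, hup, hvq, huq, hvp, hxy, hzw, hxz, hyw, hn⟩ := H.exists_four_cycles h
  have uA : ∀ {s t t'}, Link E e a s t → Link E e a s t' → t = t' :=
    fun h h' => h.unique H.lin h'
  have uC : ∀ {s t t'}, Link E e c s t → Link E e c s t' → t = t' :=
    fun h h' => h.unique H.lin h'
  have hall : ∀ {s t}, Link E e a s t → s ≠ u → t ≠ u →
      (Link E e a p q ∧ (s = p ∨ s = q)) ∨ (Link E e a x w ∧ (s = x ∨ s = w)) ∨
        (Link E e a y z ∧ (s = y ∨ s = z)) := by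
    have mem : ∀ {s t}, Link E e a s t → s ≠ u → t ≠ u →
        s = p ∨ s = q ∨ s = x ∨ s = y ∨ s = z ∨ s = w →
        (Link E e a p q ∧ (s = p ∨ s = q)) ∨ (Link E e a x w ∧ (s = x ∨ s = w)) ∨
        (Link E e a y z ∧ (s = y ∨ s = z)) := by
      intro s t hst hsu htu hs
      rcases hs with rfl | rfl | rfl | rfl | rfl | rfl
      · obtain rfl := uC (H.link_diag hst hup.symm).symm huq
        exact Or.inl ⟨hst, Or.inl rfl⟩
      · obtain rfl := uC (H.link_diag hst hvq.symm).symm hvp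
        exact Or.inl ⟨hst.symm, Or.inr rfl⟩
      · obtain rfl := uC (H.link_diag hst hxy).symm hyw
        exact Or.inr (Or.inl ⟨hst, Or.inl rfl⟩)
      · obtain rfl := uC (H.link_diag hst hxy.symm).symm hxz
        exact Or.inr (Or.inr ⟨hst, Or.inl rfl⟩)
      · obtain rfl := uC (H.link_diag hst hzw).symm hyw.symm
        exact Or.inr (Or.inr ⟨hst.symm, Or.inr rfl⟩)
      · obtain rfl := uC (H.link_diag hst hzw.symm).symm hxz.symm
        exact Or.inr (Or.inl ⟨hst.symm, Or.inr rfl⟩)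
    intro s t hst hsu htu
    by_cases hs : s = p ∨ s = q ∨ s = x ∨ s = y ∨ s = z ∨ s = w
    · exact mem hst hsu htu hs
    · by_cases ht : t = p ∨ t = q ∨ t = x ∨ t = y ∨ t = z ∨ t = w
      · have hst' := hst.symm
        rcases mem hst' htu hsu ht with ⟨hl, rfl | rfl⟩ | ⟨hl, rfl | rfl⟩ | ⟨hl, rfl | rfl⟩
        · exact absurd (uA hst' hl) (by tauto)
        · exact absurd (uA hst' hl.symm) (by tauto)
        · exact absurd (uA hst' hl) (by tauto)
        · exact absurd (uA hst' hl.symm) (by tauto)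
        · exact absurd (uA hst' hl) (by tauto)
        · exact absurd (uA hst' hl.symm) (by tauto)
      · exfalso
        have := H.not_crown hst hup hxz
        simp only [List.nodup_cons, List.mem_cons, List.not_mem_nil, or_false, not_or,
          List.nodup_nil, not_false_eq_true, and_true] at hn
        grind
  have hnodup : [a, b, c, u, v, p, q, x, y, z, w].Nodup := by
    have h1 := fun g (hg : g ∈ e) => h.ne_of_mem hg
    have h2 := fun g (hg : g ∈ e) => hup.ne_of_mem hg
    have h3 := fun g (hg : g ∈ e) => hvq.ne_of_mem hg
    have h4 := fun g (hg : g ∈ e) => hxy.ne_of_mem hg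
    have h5 := fun g (hg : g ∈ e) => hzw.ne_of_mem hg
    have := H.ha
    have := H.hb
    have := H.hc
    have := H.hab
    have := H.hac
    have := H.hbc
    simp only [List.nodup_cons, List.mem_cons, List.not_mem_nil, or_false, not_or,
      List.nodup_nil, not_false_eq_true, and_true] at hn ⊢
    grind
  have two : (Link E e a p q ∧ Link E e a x w) ∨ (Link E e a p q ∧ Link E e a y z) ∨
      (Link E e a x w ∧ Link E e a y z) := by
    obtain ⟨s, t, hst, hsu, -, htu, -⟩ := exists_link_avoid_two H.lin H.mem H.ha H.da h.2.1 h.2.1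
    obtain ⟨s', t', hst', hsu', hss', htu', hts'⟩ :=
      exists_link_avoid_two H.lin H.mem H.ha H.da h.2.1 hst.2.1
    have h1 := hall hst hsu htu
    have h2 := hall hst' hsu' htu'
    have aux : ∀ {k l : V}, Link E e a k l → (s = k ∨ s = l) → (s' = k ∨ s' = l) → False := by
      rintro k l hkl (rfl | rfl) (rfl | rfl)
      · exact hss' rfl
      · exact hts' (uA hst' hkl.symm)
      · exact hts' (uA hst' hkl)
      · exact hss' rfl
    rcases h1 with ⟨hl, h1⟩ | ⟨hl, h1⟩ | ⟨hl, h1⟩ <;>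
      rcases h2 with ⟨hl', h2⟩ | ⟨hl', h2⟩ | ⟨hl', h2⟩ <;>
      first
      | exact (aux hl h1 h2).elim
      | exact Or.inl ⟨hl, hl'⟩
      | exact Or.inl ⟨hl', hl⟩
      | exact Or.inr (Or.inl ⟨hl, hl'⟩)
      | exact Or.inr (Or.inl ⟨hl', hl⟩)
      | exact Or.inr (Or.inr ⟨hl, hl'⟩)
      | exact Or.inr (Or.inr ⟨hl', hl⟩)
  rcases two with ⟨h1, h2⟩ | ⟨h1, h2⟩ | ⟨h1, h2⟩
  · exact ⟨u, p, v, q, x, y, w, z, h.1, h1.1, h2.1, hup.1, hvq.1, hxy.1, hzw.symm.1,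
      hvp.symm.1, huq.symm.1, hyw.1, hxz.symm.1, by simp at hnodup ⊢; grind⟩
  · exact ⟨u, p, v, q, y, x, z, w, h.1, h1.1, h2.1, hup.1, hvq.1, hxy.symm.1, hzw.1,
      hvp.symm.1, huq.symm.1, hxz.1, hyw.symm.1, by simp at hnodup ⊢; grind⟩
  · exact ⟨x, y, w, z, u, p, v, q, h1.1, h2.1, h.1, hxy.1, hzw.symm.1, hup.1, hvq.1,
      hyw.1, hxz.symm.1, hvp.symm.1, huq.symm.1, by simp at hnodup ⊢; grind⟩

/-- Eleven vertices such that every edge meeting them passes through `a`, `b` or `c`. -/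
lemma exists_closed (H : IsHeavy E e a b c) {S : Finset V} (hS : ∀ e ∈ E, e ⊆ S) :
    ∃ T : Finset V, T.card = 11 ∧ T ⊆ S ∧
      ∀ g ∈ E, a ∉ g → b ∉ g → c ∉ g → Disjoint g T := by
  obtain ⟨x₀, x₁, x₂, x₃, x₄, x₅, x₆, x₇, B⟩ := H.exists_isBlockPair
  exact ⟨_, B.card_eq, B.subset hS, fun g hg ha hb hc => B.disjoint H.lin H.crown hg ha hb hc⟩

end IsHeavy

section Three

variable {V : Type*} [DecidableEq V]

lemma lt_of_sum_inv_lt {x y z : ℕ} (hx : 0 < x) (hy : 0 < y) (hz : 0 < z) (hx5 : x ≤ 5)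
    (hy5 : y ≤ 5) (hz5 : z ≤ 5) (h : (1 : ℝ) / x + (1 / y + 1 / z) < 2 / 3) :
    (4 ≤ x ∧ 5 ≤ y ∧ 5 ≤ z) ∨ (4 ≤ y ∧ 5 ≤ x ∧ 5 ≤ z) ∨ (4 ≤ z ∧ 5 ≤ x ∧ 5 ≤ y) := by
  interval_cases x <;> interval_cases y <;> interval_cases z <;>
    first
    | (exfalso; norm_num at h; done)
    | omega

/-- An edge with small `∑ 1 / degree` is heavy, and its vertices have degree at most five. -/
lemma IsLinear.exists_isHeavy {E : Finset (Finset V)} (h : IsLinear 3 E)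
    (hc : ¬ HasCrown 3 E) {e : Finset V} (he : e ∈ E)
    (hlt : ∑ v ∈ e, (1 : ℝ) / degree E v < 2 / 3) :
    ∃ a b c, IsHeavy E e a b c ∧ degree E a ≤ 5 ∧ degree E b ≤ 5 ∧ degree E c ≤ 5 := by
  obtain ⟨s, hse, hs, hd⟩ := h.exists_low_degree hc he
  have h1 := le_sum_inv_degree he hse hd
  have hs1 : 0 < s.card := Finset.card_pos.2 hs
  have hs3 : s.card ≤ 3 := h.1 e he ▸ Finset.card_le_card hse
  have hs_eq : s = e := by
    apply Finset.eq_of_subset_of_card_le hse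
    rw [h.1 e he]
    by_contra hcon
    have hlt' := lt_of_le_of_lt h1 hlt
    obtain h2 | h2 : s.card = 1 ∨ s.card = 2 := by omega
    all_goals rw [h2] at hlt'; norm_num at hlt'
  subst hs_eq
  rw [h.1 s he] at hd
  obtain ⟨x, y, z, hxy, hxz, hyz, rfl⟩ := Finset.card_eq_three.1 (h.1 s he)
  rw [Finset.sum_insert (by simp [hxy, hxz]), Finset.sum_pair hyz] at hlt
  have dx : degree E x ≤ 5 := by simpa using hd x (by simp)
  have dy : degree E y ≤ 5 := by simpa using hd y (by simp)
  have dz : degree E z ≤ 5 := by simpa using hd z (by simp)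
  rcases lt_of_sum_inv_lt (degree_pos_of_mem he (by simp)) (degree_pos_of_mem he (by simp))
    (degree_pos_of_mem he (by simp)) dx dy dz hlt with ⟨h1, h2, h3⟩ | ⟨h1, h2, h3⟩ | ⟨h1, h2, h3⟩
  · exact ⟨x, y, z, ⟨h, hc, he, by simp, by simp, by simp, hxy, hxz, hyz, h1, h2, h3⟩, dx, dy, dz⟩
  · exact ⟨y, x, z, ⟨h, hc, he, by simp, by simp, by simp, hxy.symm, hyz, hxz, h1, h2, h3⟩,
      dy, dx, dz⟩
  · exact ⟨z, x, y, ⟨h, hc, he, by simp, by simp, by simp, hxz.symm, hyz.symm, hxy, h1, h2, h3⟩,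
      dz, dx, dy⟩

lemma IsLinear.mono {r : ℕ} {E E' : Finset (Finset V)} (h : IsLinear r E) (hE : E' ⊆ E) :
    IsLinear r E' :=
  ⟨fun e he => h.1 e (hE he), fun e he f hf => h.2 e (hE he) f (hE hf)⟩

lemma HasCrown.mono {r : ℕ} {E E' : Finset (Finset V)} (h : HasCrown r E') (hE : E' ⊆ E) :
    HasCrown r E := by
  obtain ⟨e, he, f, hf, h⟩ := h
  exact ⟨e, hE he, f, fun i => hE (hf i), h⟩

lemma IsLinear.two_mul_card_le (S : Finset V) (E : Finset (Finset V)) (hS : ∀ e ∈ E, e ⊆ S)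
    (h : IsLinear 3 E) (hc : ¬ HasCrown 3 E) : 2 * E.card ≤ 3 * S.card := by
  induction hn : S.card using Nat.strong_induction_on generalizing S E with
  | _ n ih =>
  subst hn
  by_cases hall : ∀ e ∈ E, (2 / 3 : ℝ) ≤ ∑ v ∈ e, (1 : ℝ) / degree E v
  · have := mul_card_le_of_le_sum_inv_degree hS hall
    have h2 : (2 : ℝ) * E.card ≤ 3 * S.card := by linarith
    exact_mod_cast h2
  · push Not at hall
    obtain ⟨e, he, hlt⟩ := hall
    obtain ⟨a, b, c, H, da, db, dc⟩ := h.exists_isHeavy hc he hlt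
    obtain ⟨T, hTc, hTS, hT⟩ := H.exists_closed hS
    have hST := Finset.card_sdiff_add_card_eq_card hTS
    have hE : E ⊆ E.filter (fun g => Disjoint g T) ∪ (E.filter (fun g => a ∈ g) ∪
        (E.filter (fun g => b ∈ g) ∪ E.filter (fun g => c ∈ g))) := by
      intro g hg
      simp only [mem_union, mem_filter, hg, true_and]
      by_contra! hcon
      exact hcon.1 (hT g hg hcon.2.1 hcon.2.2.1 hcon.2.2.2)
    have hcard := Finset.card_le_card hE
    have hu1 := Finset.card_union_le (E.filter (fun g => Disjoint g T))
      (E.filter (fun g => a ∈ g) ∪ (E.filter (fun g => b ∈ g) ∪ E.filter (fun g => c ∈ g)))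
    have hu2 := Finset.card_union_le (E.filter (fun g => a ∈ g))
      (E.filter (fun g => b ∈ g) ∪ E.filter (fun g => c ∈ g))
    have hu3 := Finset.card_union_le (E.filter (fun g => b ∈ g)) (E.filter (fun g => c ∈ g))
    have hsub : E.filter (fun g => Disjoint g T) ⊆ E := Finset.filter_subset _ _
    have hrec := ih (S \ T).card (by omega) (S \ T) (E.filter (fun g => Disjoint g T))
      (fun g hg => Finset.subset_sdiff.2 ⟨hS g (hsub hg), (mem_filter.1 hg).2⟩)
      (h.mono hsub) (fun hh => hc (hh.mono hsub)) rfl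
    unfold degree at da db dc
    omega

end Three

section Construction

variable {F : Type*} [Field F]

/-- The point with parameter `t` on the line of slope `s` and intercept `c`. -/
def affinePoint (s : Option F) (c t : F) : F × F :=
  s.elim (c, t) (fun a => (t, a * t + c))

lemma affinePoint_injective (s : Option F) (c : F) : Function.Injective (affinePoint s c) := by
  intro t t' h
  cases s <;> simp [affinePoint] at h <;> grind

variable [Fintype F] [DecidableEq F] {m : ℕ}

/-- The line of slope `s` and intercept `c` in the `j`-th affine plane, together with the
common point at infinity of slope `s`. -/
def affineEdge (i : Fin m × Option F × F) : Finset (Option F ⊕ Fin m × F × F) :=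
  insert (Sum.inl i.2.1) (univ.image (fun t => Sum.inr (i.1, affinePoint i.2.1 i.2.2 t)))

lemma card_affineEdge (i : Fin m × Option F × F) :
    (affineEdge i).card = Fintype.card F + 1 := by
  unfold affineEdge
  rw [Finset.card_insert_of_notMem (by simp), Finset.card_image_of_injective, Finset.card_univ]
  intro t t' h
  simp only [Sum.inr.injEq, Prod.mk.injEq, true_and] at h
  exact affinePoint_injective _ _ h

lemma inl_mem_affineEdge {i : Fin m × Option F × F} {s : Option F} :
    Sum.inl s ∈ affineEdge i ↔ s = i.2.1 := by
  simp [affineEdge]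

lemma inr_mem_affineEdge {i : Fin m × Option F × F} {j : Fin m} {x y : F} :
    Sum.inr (j, x, y) ∈ affineEdge i ↔
      j = i.1 ∧ i.2.1.elim (x = i.2.2) (fun a => y = a * x + i.2.2) := by
  obtain ⟨j', s, c⟩ := i
  cases s <;> simp [affineEdge, affinePoint] <;> grind

lemma affineEdge_eq_of_mem {i i' : Fin m × Option F × F} {P Q : Option F ⊕ Fin m × F × F}
    (hPQ : P ≠ Q) (hP : P ∈ affineEdge i) (hQ : Q ∈ affineEdge i)
    (hP' : P ∈ affineEdge i') (hQ' : Q ∈ affineEdge i') : i = i' := by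
  obtain ⟨j, s, c⟩ := i
  obtain ⟨j', s', c'⟩ := i'
  rcases P with u | ⟨k, x, y⟩ <;> rcases Q with u' | ⟨k', x', y'⟩ <;>
    simp only [inl_mem_affineEdge, inr_mem_affineEdge] at hP hQ hP' hQ' <;>
    rcases s with _ | s <;> rcases s' with _ | s' <;>
    (try simp only [Option.elim] at hP hQ hP' hQ') <;> try grind
  have hx : x ≠ x' := by grind
  have : (s - s') * (x - x') = 0 := by grind
  have : s = s' := by
    rcases mul_eq_zero.1 this with h | h
    · exact sub_eq_zero.1 h
    · exact absurd (sub_eq_zero.1 h) hx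
  grind

/-- Lines of different slopes in the same affine plane meet. -/
lemma not_disjoint_affineEdge {j : Fin m} {s s' : Option F} (c c' : F) (hs : s ≠ s') :
    ¬ Disjoint (affineEdge (j, s, c)) (affineEdge (j, s', c')) := by
  rw [Finset.not_disjoint_iff]
  rcases s with _ | s <;> rcases s' with _ | s'
  · exact absurd rfl hs
  · exact ⟨Sum.inr (j, c, s' * c + c'), by simp [inr_mem_affineEdge]⟩
  · exact ⟨Sum.inr (j, c', s * c' + c), by simp [inr_mem_affineEdge]⟩
  · have hs' : s - s' ≠ 0 := fun h => hs (by rw [sub_eq_zero.1 h])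
    refine ⟨Sum.inr (j, (c' - c) / (s - s'), s * ((c' - c) / (s - s')) + c), ?_, ?_⟩
    · simp [inr_mem_affineEdge]
    · simp only [inr_mem_affineEdge, Option.elim, true_and]
      field_simp
      ring

lemma not_disjoint_of_meet_affine {i f g : Fin m × Option F × F}
    (hf : ¬ Disjoint (affineEdge i) (affineEdge f)) (hf' : Sum.inl i.2.1 ∉ affineEdge f)
    (hg : ¬ Disjoint (affineEdge i) (affineEdge g)) (hg' : Sum.inl i.2.1 ∉ affineEdge g) :
    ¬ Disjoint (affineEdge f) (affineEdge g) := by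
  have aux : ∀ h : Fin m × Option F × F, ¬ Disjoint (affineEdge i) (affineEdge h) →
      Sum.inl i.2.1 ∉ affineEdge h → h.1 = i.1 := by
    intro h hh hh'
    rw [Finset.not_disjoint_iff] at hh
    obtain ⟨u | ⟨k, x, y⟩, hP, hP'⟩ := hh
    · rw [inl_mem_affineEdge] at hP
      exact absurd (hP ▸ hP') hh'
    · rw [inr_mem_affineEdge] at hP hP'
      exact hP'.1.symm.trans hP.1
  have hfi := aux f hf hf'
  have hgi := aux g hg hg'
  obtain ⟨j, s, c⟩ := f
  obtain ⟨j', s', c'⟩ := g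
  obtain rfl : j = j' := hfi.trans hgi.symm
  by_cases hs : s = s'
  · subst hs
    exact Finset.not_disjoint_iff.2 ⟨Sum.inl s, by simp [inl_mem_affineEdge]⟩
  · exact not_disjoint_affineEdge c c' hs

/-- No three pairwise disjoint edges of the construction all meet a common edge. -/
lemma not_three_disjoint_affineEdge {i f g h : Fin m × Option F × F}
    (hf : ¬ Disjoint (affineEdge i) (affineEdge f)) (hg : ¬ Disjoint (affineEdge i) (affineEdge g))
    (hh : ¬ Disjoint (affineEdge i) (affineEdge h))
    (hfg : Disjoint (affineEdge f) (affineEdge g)) (hfh : Disjoint (affineEdge f) (affineEdge h))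
    (hgh : Disjoint (affineEdge g) (affineEdge h)) : False := by
  by_cases h1 : Sum.inl i.2.1 ∈ affineEdge f
  · exact not_disjoint_of_meet_affine hg (Finset.disjoint_left.1 hfg h1) hh
      (Finset.disjoint_left.1 hfh h1) hgh
  · by_cases h2 : Sum.inl i.2.1 ∈ affineEdge g
    · exact not_disjoint_of_meet_affine hf h1 hh (Finset.disjoint_left.1 hgh h2) hfh
    · exact not_disjoint_of_meet_affine hf h1 hg h2 hfg

end Construction

/-- Three pairwise disjoint edges that all meet a fourth one. -/
def HasThreeDisjoint {V : Type*} [DecidableEq V] (E : Finset (Finset V)) : Prop :=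
  ∃ e ∈ E, ∃ f ∈ E, ∃ g ∈ E, ∃ h ∈ E, ¬ Disjoint e f ∧ ¬ Disjoint e g ∧ ¬ Disjoint e h ∧
    Disjoint f g ∧ Disjoint f h ∧ Disjoint g h

section Forbidden

variable {V : Type*} [DecidableEq V] {r : ℕ} {E : Finset (Finset V)}

lemma not_disjoint_of_card_inter_eq_one {e f : Finset V} (h : (e ∩ f).card = 1) :
    ¬ Disjoint e f := by
  rw [Finset.disjoint_iff_inter_eq_empty]
  intro h'
  simp [h'] at h

lemma HasCrown.hasThreeDisjoint (hr : 3 ≤ r) (h : HasCrown r E) : HasThreeDisjoint E := by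
  obtain ⟨e, he, f, hfE, -, hd, hc⟩ := h
  simp only [← Finset.disjoint_iff_inter_eq_empty] at hd
  exact ⟨e, he, f ⟨0, by omega⟩, hfE _, f ⟨1, by omega⟩, hfE _, f ⟨2, by omega⟩, hfE _,
    not_disjoint_of_card_inter_eq_one (hc _), not_disjoint_of_card_inter_eq_one (hc _),
    not_disjoint_of_card_inter_eq_one (hc _), hd _ _ (by simp), hd _ _ (by simp),
    hd _ _ (by simp)⟩

lemma HasCStar.hasThreeDisjoint (hr : 3 ≤ r) (h : HasCStar r E) : HasThreeDisjoint E := by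
  obtain ⟨v, e, he, f, hfE, -, -, -, hd, hc, -⟩ := h
  simp only [← Finset.disjoint_iff_inter_eq_empty] at hd
  refine ⟨e, he, f ⟨r - 1, by omega⟩, hfE _, f ⟨r - 2, by omega⟩, hfE _, f ⟨0, by omega⟩, hfE _,
    not_disjoint_of_card_inter_eq_one (hc _), not_disjoint_of_card_inter_eq_one (hc _),
    not_disjoint_of_card_inter_eq_one (hc _), hd _ _ ?_ ?_, hd _ _ ?_ ?_, hd _ _ ?_ ?_⟩ <;>
    simp <;> omega

end Forbidden

lemma exists_affine_hypergraph (F : Type*) [Field F] [Fintype F] (m n : ℕ)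
    (hn : Fintype.card F + 1 + m * Fintype.card F ^ 2 ≤ n) :
    ∃ E : Finset (Finset (Fin n)), IsLinear (Fintype.card F + 1) E ∧ ¬ HasThreeDisjoint E ∧
      E.card = m * ((Fintype.card F + 1) * Fintype.card F) := by
  classical
  have hcard : Fintype.card (Option F ⊕ Fin m × F × F) ≤ Fintype.card (Fin n) := by
    simp only [Fintype.card_sum, Fintype.card_option, Fintype.card_prod, Fintype.card_fin]
    nlinarith
  obtain ⟨φ⟩ := Function.Embedding.nonempty_of_card_le hcard
  have hinter : ∀ i i' : Fin m × Option F × F, i ≠ i' →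
      (affineEdge i ∩ affineEdge i').card ≤ 1 := by
    intro i i' hne
    rw [Finset.card_le_one]
    intro P hP Q hQ
    simp only [mem_inter] at hP hQ
    by_contra hPQ
    exact hne (affineEdge_eq_of_mem hPQ hP.1 hQ.1 hP.2 hQ.2)
  have hinj : Function.Injective
      (fun i : Fin m × Option F × F => (affineEdge i).map φ) := by
    intro i i' h
    by_contra hne
    have h1 := hinter i i' hne
    rw [Finset.map_injective φ h, Finset.inter_self, card_affineEdge] at h1
    have : 0 < Fintype.card F := Fintype.card_pos
    omega
  refine ⟨univ.image (fun i : Fin m × Option F × F => (affineEdge i).map φ), ⟨?_, ?_⟩, ?_, ?_⟩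
  · intro e he
    obtain ⟨i, -, rfl⟩ := mem_image.1 he
    rw [Finset.card_map, card_affineEdge]
  · intro e he f hf hne
    obtain ⟨i, -, rfl⟩ := mem_image.1 he
    obtain ⟨i', -, rfl⟩ := mem_image.1 hf
    rw [← Finset.map_inter, Finset.card_map]
    exact hinter i i' (fun h => hne (by rw [h]))
  · rintro ⟨e, he, f, hf, g, hg, h, hh, h1, h2, h3, h4, h5, h6⟩
    obtain ⟨i, -, rfl⟩ := mem_image.1 he
    obtain ⟨i1, -, rfl⟩ := mem_image.1 hf
    obtain ⟨i2, -, rfl⟩ := mem_image.1 hg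
    obtain ⟨i3, -, rfl⟩ := mem_image.1 hh
    rw [Finset.disjoint_map] at h1 h2 h3 h4 h5 h6
    exact not_three_disjoint_affineEdge h1 h2 h3 h4 h5 h6
  · rw [Finset.card_image_of_injective _ hinj, Finset.card_univ]
    simp only [Fintype.card_option, Fintype.card_prod, Fintype.card_fin]

/-- For `r ≥ 3` with `r - 1` a prime power and all sufficiently large `n`:
`r(r-1)⌊(n-r)/(r-1)^2⌋ ≤ ex_r^{lin}(n, {C_{1r}, C*}) ≤ r(r-2)n/(r-1)`. -/
theorem turan_bounds (r : ℕ) (hr : 3 ≤ r)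
    (p k : ℕ) (hp : p.Prime) (hk : 0 < k) (hpp : r - 1 = p ^ k) :
    ∃ N : ℕ, ∀ n : ℕ, N ≤ n →
      (∃ E : Finset (Finset (Fin n)),
        IsLinear r E ∧ ¬ HasCrown r E ∧ ¬ HasCStar r E ∧
        r * (r - 1) * ((n - r) / (r - 1) ^ 2) ≤ E.card) ∧
      (∀ E : Finset (Finset (Fin n)),
        IsLinear r E → ¬ HasCrown r E → ¬ HasCStar r E →
        (E.card : ℝ) ≤ r * (r - 2) * n / (r - 1)) := by
  have hcardF : 1 < p ^ k := Nat.one_lt_pow hk.ne' hp.one_lt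
  refine ⟨r, fun n hn => ⟨?_, ?_⟩⟩
  · have : Fact p.Prime := ⟨hp⟩
    let : Fintype (GaloisField p k) := Fintype.ofFinite _
    have hF : Fintype.card (GaloisField p k) = r - 1 := by
      rw [← Nat.card_eq_fintype_card, GaloisField.card p k hk.ne', hpp]
    have hr1 : r - 1 + 1 = r := by omega
    have hdiv := Nat.div_mul_le_self (n - r) ((r - 1) ^ 2)
    obtain ⟨E, h1, h2, h3⟩ := exists_affine_hypergraph (GaloisField p k)
      ((n - r) / (r - 1) ^ 2) n (by rw [hF, hr1]; omega)
    rw [hF, hr1] at h1 h3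
    refine ⟨E, h1, fun hh => h2 (hh.hasThreeDisjoint hr), fun hh => h2 (hh.hasThreeDisjoint hr),
      ?_⟩
    rw [h3, mul_comm]
  · intro E hE hc _
    rcases hr.eq_or_lt with rfl | hr4
    · have := IsLinear.two_mul_card_le univ E (fun e _ => subset_univ e) hE hc
      rw [Finset.card_univ, Fintype.card_fin] at this
      have h2 : (2 : ℝ) * E.card ≤ 3 * n := by exact_mod_cast this
      push_cast
      linarith
    · simpa using hE.card_le_of_four_le hr4 hc (S := univ) (fun e _ => subset_univ e)
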